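/- Let λ = (λ_1 ≥ … ≥ λ_k ≥ 1) be a partition with k positive parts, let 0 ≤ t ≤ k−1, and let n ≥ k. Set μ := (λ_1,…,λ_t, λ_{t+2}−1, …, λ_k−1), ν := (λ_1+1,…,λ_t+1, λ_{t+2},…,λ_k) (each with k−1 parts), and ρ := (λ_1−1,…,λ_k−1). Then, as polynomials in x_1,…,x_n: s^{[n]}_λ · s^{[2,n]}_μ = s^{[2,n]}_λ · s^{[n]}_μ + x_1 · s^{[n]}_ρ · s^{[2,n]}_ν. -/

import Mathlib

/-- A semistandard Young tableau of shape `(lam 0, lam 1, …, lam (k-1))` (so `lam i` is the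
length of the `(i+1)`-st row), with entries in `{a, a+1, …, b}`: rows weakly increase,
columns strictly increase.  Entries outside the shape are `0`. -/
structure SSYT (k : ℕ) (lam : ℕ → ℤ) (a b : ℕ) where
  entry : ℕ → ℕ → ℕ
  zero_outside : ∀ i j : ℕ, ¬(i < k ∧ (j : ℤ) < lam i) → entry i j = 0
  lower : ∀ i j : ℕ, i < k → (j : ℤ) < lam i → a ≤ entry i j
  upper : ∀ i j : ℕ, i < k → (j : ℤ) < lam i → entry i j ≤ b
  row_weak : ∀ i j₁ j₂ : ℕ, i < k → j₁ ≤ j₂ → (j₂ : ℤ) < lam i → entry i j₁ ≤ entry i j₂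
  col_strict : ∀ i₁ i₂ j : ℕ, i₁ < i₂ → i₂ < k → (j : ℤ) < lam i₂ → entry i₁ j < entry i₂ j

/-- The monomial `Π_i x_i^{m(i,T)}` of a tableau: the product of `x_{T(c)}` over the
cells `c` of the shape. -/
noncomputable def SSYT.weight {k : ℕ} {lam : ℕ → ℤ} {a b : ℕ} (T : SSYT k lam a b) :
    MvPolynomial ℕ ℤ :=
  ∏ i ∈ Finset.range k, ∏ j ∈ Finset.range (lam i).toNat, MvPolynomial.X (T.entry i j)

/-- `(lam 0, …, lam (k-1))` is a partition: weakly decreasing with nonnegative entries. -/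
def IsPartitionSeq (k : ℕ) (lam : ℕ → ℤ) : Prop :=
  (∀ i, i + 1 < k → lam (i + 1) ≤ lam i) ∧ (∀ i, i < k → 0 ≤ lam i)

/-- The Schur polynomial `s^{[a,b]}_lam = Σ_T Π_i x_i^{m(i,T)}`, the sum running over all
semistandard Young tableaux of shape `lam` with entries in `{a,…,b}`; by convention it is
`0` if `lam` is not a partition. -/
noncomputable def schur (k : ℕ) (lam : ℕ → ℤ) (a b : ℕ) : MvPolynomial ℕ ℤ :=
  letI := Classical.dec (IsPartitionSeq k lam)
  if IsPartitionSeq k lam then ∑ᶠ T : SSYT k lam a b, T.weight else 0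

/-!
By Jacobi–Trudi, `s_λ = det (h (l i + j))` with `l i = λ i - i`. In these coordinates `μ` is `l`
with the entry at `t` deleted, `ν` is that plus `1`, and `ρ` is `l - 1`. Column operations with
`h_m(x, s) = h_m(s) + x * h_{m-1}(x, s)` turn all six determinants into combinations of minors
of one matrix with columns `h_{l-1}(x, s), h_l(s), h_{l+1}(s), …`, and the identity becomes
a three-term Plücker relation.

Jacobi–Trudi itself is proved by removing the largest letter: both sides satisfy the same
recursion over the shapes interlacing with `λ`, the determinant because subtracting multiples of
consecutive rows truncates its entries to the interlacing intervals.
-/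

section HsymmOn

variable {σ R : Type*} [DecidableEq σ] [CommRing R]

/-- The complete homogeneous symmetric polynomial of degree `m` in the variables indexed by `s`.
The degree is an integer, with value `0` in negative degrees, because Jacobi–Trudi matrices refer
to such degrees. -/
noncomputable def hsymmOn (s : Finset σ) (m : ℤ) : MvPolynomial σ R :=
  if 0 ≤ m then ∑ t ∈ s.sym m.toNat, ((t : Multiset σ).map MvPolynomial.X).prod else 0

lemma hsymmOn_of_neg (s : Finset σ) {m : ℤ} (hm : m < 0) :
    (hsymmOn s m : MvPolynomial σ R) = 0 :=
  if_neg hm.not_ge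

lemma hsymmOn_natCast (s : Finset σ) (n : ℕ) :
    (hsymmOn s n : MvPolynomial σ R) =
      ∑ t ∈ s.sym n, ((t : Multiset σ).map MvPolynomial.X).prod := by
  simp [hsymmOn]

lemma hsymmOn_zero (s : Finset σ) : (hsymmOn s 0 : MvPolynomial σ R) = 1 := by
  have h := hsymmOn_natCast (R := R) s 0
  rw [Finset.sym_zero, Finset.sum_singleton] at h
  exact h

lemma hsymmOn_empty (m : ℤ) :
    (hsymmOn ∅ m : MvPolynomial σ R) = if m = 0 then 1 else 0 := by
  split_ifs with hm
  · rw [hm, hsymmOn_zero]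
  obtain hneg | hpos := lt_or_gt_of_ne hm
  · exact hsymmOn_of_neg _ hneg
  · obtain ⟨n, rfl⟩ : ∃ n : ℕ, m = (n + 1 : ℕ) := ⟨m.toNat - 1, by omega⟩
    rw [hsymmOn_natCast, Finset.sym_empty, Finset.sum_empty]

lemma filter_notMem_sym_insert {s : Finset σ} {x : σ} (hx : x ∉ s) (n : ℕ) :
    {t ∈ (insert x s).sym n | x ∉ t} = s.sym n := by
  ext t
  simp only [Finset.mem_filter, Finset.mem_sym_iff, Finset.mem_insert]
  grind

lemma sum_filter_mem_sym_insert {M : Type*} [AddCommMonoid M] (s : Finset σ) (x : σ) (n : ℕ)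
    (f : Sym σ (n + 1) → M) :
    ∑ t ∈ (insert x s).sym (n + 1) with x ∈ t, f t = ∑ t ∈ (insert x s).sym n, f (x ::ₛ t) := by
  symm
  refine Finset.sum_bij (fun t _ => x ::ₛ t) ?_ (fun _ _ _ _ => Sym.cons_inj_right x _ _ |>.1) ?_
    fun _ _ => rfl
  · intro t ht
    rw [Finset.mem_sym_iff] at ht
    simp only [Finset.mem_filter, Finset.mem_sym_iff, Sym.mem_cons]
    grind
  · intro t ht
    rw [Finset.mem_filter, Finset.mem_sym_iff] at ht
    refine ⟨t.erase x ht.2, Finset.mem_sym_iff.2 fun y hy => ht.1 y ?_, Sym.cons_erase ht.2⟩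
    exact Multiset.mem_of_mem_erase hy

lemma hsymmOn_insert {s : Finset σ} {x : σ} (hx : x ∉ s) (m : ℤ) :
    (hsymmOn (insert x s) m : MvPolynomial σ R) =
      hsymmOn s m + MvPolynomial.X x * hsymmOn (insert x s) (m - 1) := by
  obtain hneg | rfl | hpos := lt_trichotomy m 0
  · simp [hsymmOn_of_neg, hneg, show m - 1 < 0 by omega]
  · simp [hsymmOn_zero, hsymmOn_of_neg]
  obtain ⟨n, rfl⟩ : ∃ n : ℕ, m = (n + 1 : ℕ) := ⟨m.toNat - 1, by omega⟩
  rw [show ((n + 1 : ℕ) : ℤ) - 1 = n by push_cast; ring]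
  simp only [hsymmOn_natCast]
  rw [← Finset.sum_filter_not_add_sum_filter _ (x ∈ ·), filter_notMem_sym_insert hx,
    sum_filter_mem_sym_insert, Finset.mul_sum]
  simp only [Sym.coe_cons, Multiset.map_cons, Multiset.prod_cons]

lemma hsymmOn_insert_eq_sum_Icc_add {s : Finset σ} {x : σ} (hx : x ∉ s) (d : ℤ) {p q : ℤ}
    (hpq : p ≤ q) :
    (hsymmOn (insert x s) (q + d) : MvPolynomial σ R) =
      ∑ m ∈ Finset.Icc p q, MvPolynomial.X x ^ (q - m).toNat * hsymmOn s (m + d) +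
        MvPolynomial.X x ^ (q - p + 1).toNat * hsymmOn (insert x s) (p - 1 + d) := by
  induction q, hpq using Int.leInduction with
  | base => simp [hsymmOn_insert hx (p + d), sub_add_eq_add_sub]
  | succ q hpq ih =>
    have hstep : ∀ m ∈ Finset.Icc p q,
        (MvPolynomial.X x ^ (q + 1 - m).toNat * hsymmOn s (m + d) : MvPolynomial σ R) =
          MvPolynomial.X x * (MvPolynomial.X x ^ (q - m).toNat * hsymmOn s (m + d)) := by
      intro m hm
      rw [show (q + 1 - m).toNat = (q - m).toNat + 1 by grind, pow_succ', mul_assoc]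
    rw [hsymmOn_insert hx, show q + 1 + d - 1 = q + d by ring, ih,
      ← Finset.insert_Icc_right_eq_Icc_add_one (by omega), Finset.sum_insert (by simp),
      Finset.sum_congr rfl hstep, ← Finset.mul_sum,
      show (q + 1 - p + 1).toNat = (q - p + 1).toNat + 1 by omega, sub_self, Int.toNat_zero,
      pow_zero]
    ring

end HsymmOn

section Determinants

variable {R : Type*} [CommRing R]

lemma det_eq_of_forall_row_eq_smul_add_succ {n : ℕ} {A B : Matrix (Fin (n + 1)) (Fin (n + 1)) R}
    (c : Fin n → R) (A_last : ∀ j, A (Fin.last n) j = B (Fin.last n) j)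
    (A_castSucc : ∀ (i : Fin n) (j), A i.castSucc j = B i.castSucc j + c i * A i.succ j) :
    A.det = B.det := by
  rw [← Matrix.det_submatrix_equiv_self Fin.revPerm A,
    ← Matrix.det_submatrix_equiv_self Fin.revPerm B]
  refine Matrix.det_eq_of_forall_row_eq_smul_add_pred (fun i => c i.rev) (fun j => ?_)
    fun i j => ?_
  · simpa using A_last j.rev
  · simpa [Fin.rev_succ, Fin.rev_castSucc] using A_castSucc i.rev j.rev

lemma sum_neg_one_pow_mul_det_submatrix_succAbove {n : ℕ} (N : Matrix (Fin n) (Fin (n + 1)) R)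
    (i : Fin n) :
    ∑ j : Fin (n + 1), (-1) ^ (j : ℕ) * N i j * (N.submatrix id j.succAbove).det = 0 := by
  have h := Matrix.det_succ_row_zero (Matrix.of (Fin.cons (N i) N))
  rw [Matrix.det_zero_of_row_eq (Fin.succ_ne_zero i).symm rfl] at h
  exact h.symm

lemma det_submatrix_finRotate {n : ℕ} (A : Matrix (Fin (n + 1)) (Fin (n + 1)) R) :
    (A.submatrix id (finRotate (n + 1))).det = (-1) ^ n * A.det := by
  simp [Matrix.det_permute', sign_finRotate]

lemma sum_neg_one_pow_mul_det_mul_det_updateCol {n : ℕ} {κ : Type*} [Fintype κ] [DecidableEq κ]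
    (N : Matrix (Fin n) (Fin (n + 1)) R) (B : Matrix κ κ R) (c : κ) (r : κ → Fin n) :
    ∑ j : Fin (n + 1), (-1) ^ (j : ℕ) * (N.submatrix id j.succAbove).det *
      (B.updateCol c fun i => N (r i) j).det = 0 := by
  have hcol : ∑ j : Fin (n + 1), ((-1) ^ (j : ℕ) * (N.submatrix id j.succAbove).det) •
      (fun i => N (r i) j) = 0 := by
    ext i
    simpa [Finset.sum_apply, mul_right_comm] using
      sum_neg_one_pow_mul_det_submatrix_succAbove N (r i)
  have hcramer := congrFun (congrArg B.cramer hcol) c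
  rw [map_sum, Finset.sum_apply, map_zero, Pi.zero_apply] at hcramer
  simpa only [map_smul, Pi.smul_apply, smul_eq_mul, Matrix.cramer_apply,
    Matrix.det_updateCol_smul] using hcramer

lemma det_submatrix_updateCol_zero_last {ι : Type*} {m : ℕ} (N : Matrix ι (Fin (m + 3)) R)
    (r : Fin (m + 1) → ι) :
    ((N.submatrix r (Fin.succ ∘ Fin.castSucc)).updateCol 0
      fun i => N (r i) (Fin.last (m + 2))).det =
      (-1) ^ m * (N.submatrix r (Fin.succ ∘ Fin.succ)).det := by
  have hrotate : N.submatrix r (Fin.succ ∘ Fin.succ) =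
      ((N.submatrix r (Fin.succ ∘ Fin.castSucc)).updateCol 0
        fun i => N (r i) (Fin.last (m + 2))).submatrix id (finRotate (m + 1)) := by
    ext i j
    induction j using Fin.lastCases <;> simp
  rw [hrotate, det_submatrix_finRotate, ← mul_assoc, ← mul_pow]
  simp

-- If `N` has columns `u, v, F, w` with `F` a block of `m` columns, this reads
-- `|u F w| |v F|ᵣ = |v F w| |u F|ᵣ + |u v F| |F w|ᵣ`, where `|·|ᵣ` uses only the
-- rows selected by `r`.
theorem det_submatrix_three_term {m : ℕ} (N : Matrix (Fin (m + 2)) (Fin (m + 3)) R)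
    (r : Fin (m + 1) → Fin (m + 2)) :
    (N.submatrix id (Fin.succAbove 1)).det * (N.submatrix r (Fin.succ ∘ Fin.castSucc)).det =
      (N.submatrix id Fin.succ).det * (N.submatrix r (Fin.castSucc ∘ Fin.succAbove 1)).det +
        (N.submatrix id Fin.castSucc).det * (N.submatrix r (Fin.succ ∘ Fin.succ)).det := by
  set B := N.submatrix r (Fin.succ ∘ Fin.castSucc) with hB
  have hsum := sum_neg_one_pow_mul_det_mul_det_updateCol N B 0 r
  have hfirst : (B.updateCol 0 fun i => N (r i) 0) =
      N.submatrix r (Fin.castSucc ∘ Fin.succAbove 1) := by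
    ext i j
    induction j using Fin.cases <;> simp [hB]
  have hsecond : (B.updateCol 0 fun i => N (r i) 1) = B := by
    ext i j
    induction j using Fin.cases <;> simp [hB]
  have hmiddle (j : Fin m) : (B.updateCol 0 fun i => N (r i) j.castSucc.succ.succ).det = 0 :=
    Matrix.det_zero_of_column_eq (Fin.succ_ne_zero j).symm fun i => by simp [hB]
  have hlast : (B.updateCol 0 fun i => N (r i) (Fin.last (m + 2))).det =
      (-1) ^ m * (N.submatrix r (Fin.succ ∘ Fin.succ)).det :=
    det_submatrix_updateCol_zero_last N r
  have hsign : (-1 : R) ^ (m + 2) * (-1) ^ m = 1 := by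
    rw [← pow_add]
    exact Even.neg_one_pow ⟨m + 1, by ring⟩
  rw [Fin.sum_univ_succ, Fin.sum_univ_succ, Fin.sum_univ_castSucc] at hsum
  simp only [Fin.val_zero, pow_zero, one_mul, Fin.succAbove_zero, hfirst, Fin.val_one, pow_one,
    Fin.succ_zero_eq_one, hsecond, hmiddle, mul_zero, Finset.sum_const_zero, zero_add,
    Fin.succ_last, Nat.succ_eq_add_one, Fin.succAbove_last, Fin.val_last, hlast] at hsum
  linear_combination (N.submatrix id Fin.castSucc).det *
    (N.submatrix r (Fin.succ ∘ Fin.succ)).det * hsign - hsum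

end Determinants

section HsymmMatrix

variable {σ R : Type*} [DecidableEq σ] [CommRing R] {k : ℕ}

/-- The Jacobi–Trudi matrix of the partition `λ` with `l i = λ i - i`. In these strictly decreasing
coordinates deleting a row of the matrix means deleting an entry of `l`, and moving one column to
the right means adding `1` to `l`. -/
noncomputable def hsymmMatrix (s : Finset σ) (l : Fin k → ℤ) :
    Matrix (Fin k) (Fin k) (MvPolynomial σ R) :=
  Matrix.of fun i j => hsymmOn s (l i + j)

lemma hsymmMatrix_empty_neg :
    (hsymmMatrix ∅ fun i : Fin k => -(i : ℤ) : Matrix _ _ (MvPolynomial σ R)) = 1 := by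
  ext1 i j
  have hij : (-i + j : ℤ) = 0 ↔ i = j := by omega
  simp [hsymmMatrix, hsymmOn_empty, Matrix.one_apply, hij]

lemma det_hsymmMatrix_empty_of_pos {l : Fin k → ℤ} {i : Fin k} (hi : 0 < l i) :
    (hsymmMatrix ∅ l : Matrix _ _ (MvPolynomial σ R)).det = 0 :=
  Matrix.det_eq_zero_of_row_eq_zero i fun j => by
    rw [hsymmMatrix, Matrix.of_apply, hsymmOn_empty, if_neg (by omega)]

lemma det_hsymmMatrix_insert {s : Finset σ} {x : σ} (hx : x ∉ s) (l : Fin (k + 1) → ℤ) :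
    (hsymmMatrix (insert x s) l : Matrix _ _ (MvPolynomial σ R)).det =
      ((hsymmMatrix s l).updateCol 0 fun i => hsymmOn (insert x s) (l i)).det := by
  refine Matrix.det_eq_of_forall_col_eq_smul_add_pred (fun _ => MvPolynomial.X x)
    (fun i => by simp [hsymmMatrix]) fun i j => ?_
  rw [Matrix.updateCol_ne (Fin.succ_ne_zero j)]
  simp only [hsymmMatrix, Matrix.of_apply, Fin.val_succ, Fin.val_castSucc, Nat.cast_add,
    Nat.cast_one]
  rw [hsymmOn_insert hx, ← add_assoc, add_sub_cancel_right]

lemma det_hsymmMatrix_insert_eq_add {s : Finset σ} {x : σ} (hx : x ∉ s) (l : Fin (k + 1) → ℤ) :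
    (hsymmMatrix (insert x s) l : Matrix _ _ (MvPolynomial σ R)).det =
      (hsymmMatrix s l).det + MvPolynomial.X x *
        ((hsymmMatrix s l).updateCol 0 fun i => hsymmOn (insert x s) (l i - 1)).det := by
  have hcol : (fun i => hsymmOn (insert x s) (l i) : Fin (k + 1) → MvPolynomial σ R) =
      (fun i => hsymmMatrix s l i 0) +
        (MvPolynomial.X x : MvPolynomial σ R) • fun i => hsymmOn (insert x s) (l i - 1) := by
    funext i
    simpa [hsymmMatrix] using hsymmOn_insert hx (l i)
  rw [det_hsymmMatrix_insert hx, hcol, Matrix.det_updateCol_add, Matrix.det_updateCol_smul,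
    Matrix.updateCol_eq_self]

lemma det_hsymmMatrix_updateCol_three_term {s : Finset σ} {x : σ} (hx : x ∉ s)
    (l : Fin (k + 2) → ℤ) (r : Fin (k + 1) → Fin (k + 2)) :
    ((hsymmMatrix s l).updateCol 0 fun i => hsymmOn (insert x s) (l i - 1)).det *
        (hsymmMatrix s (l ∘ r) : Matrix _ _ (MvPolynomial σ R)).det =
      (hsymmMatrix s l).det *
          ((hsymmMatrix s (l ∘ r)).updateCol 0 fun i => hsymmOn (insert x s) (l (r i) - 1)).det +
        (hsymmMatrix (insert x s) (l - 1)).det * (hsymmMatrix s (l ∘ r + 1)).det := by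
  let N : Matrix (Fin (k + 2)) (Fin (k + 3)) (MvPolynomial σ R) :=
    Matrix.of fun i => Fin.cons (hsymmOn (insert x s) (l i - 1)) fun j => hsymmOn s (l i + j)
  have hsucc : N.submatrix id Fin.succ = hsymmMatrix s l := rfl
  have hsucc_castSucc : N.submatrix r (Fin.succ ∘ Fin.castSucc) = hsymmMatrix s (l ∘ r) := rfl
  have hsuccAbove : N.submatrix id (Fin.succAbove 1) =
      (hsymmMatrix s l).updateCol 0 fun i => hsymmOn (insert x s) (l i - 1) := by
    ext1 i j
    induction j using Fin.cases <;> simp [N, hsymmMatrix]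
  have hcastSucc_succAbove : N.submatrix r (Fin.castSucc ∘ Fin.succAbove 1) =
      (hsymmMatrix s (l ∘ r)).updateCol 0 fun i => hsymmOn (insert x s) (l (r i) - 1) := by
    ext1 i j
    induction j using Fin.cases <;> simp [N, hsymmMatrix]
  have hcastSucc : N.submatrix id Fin.castSucc =
      (hsymmMatrix s (l - 1)).updateCol 0 fun i => hsymmOn (insert x s) ((l - 1) i) := by
    ext1 i j
    induction j using Fin.cases <;> simp [N, hsymmMatrix]
  have hsucc_succ : N.submatrix r (Fin.succ ∘ Fin.succ) = hsymmMatrix s (l ∘ r + 1) := by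
    ext1 i j
    simp [N, hsymmMatrix, add_assoc, add_comm (1 : ℤ)]
  have hN := det_submatrix_three_term N r
  rwa [hsucc, hsucc_castSucc, hsuccAbove, hcastSucc_succAbove, hcastSucc, hsucc_succ,
    ← det_hsymmMatrix_insert hx] at hN

theorem det_hsymmMatrix_three_term {s : Finset σ} {x : σ} (hx : x ∉ s) (l : Fin (k + 1) → ℤ)
    (r : Fin k → Fin (k + 1)) :
    (hsymmMatrix (insert x s) l : Matrix _ _ (MvPolynomial σ R)).det *
        (hsymmMatrix s (l ∘ r)).det =
      (hsymmMatrix s l).det * (hsymmMatrix (insert x s) (l ∘ r)).det +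
        MvPolynomial.X x * (hsymmMatrix (insert x s) (l - 1)).det *
          (hsymmMatrix s (l ∘ r + 1)).det := by
  cases k with
  | zero => simp [hsymmMatrix, hsymmOn_insert hx (l 0)]
  | succ k =>
    rw [det_hsymmMatrix_insert_eq_add hx l, det_hsymmMatrix_insert_eq_add hx (l ∘ r)]
    simp only [Function.comp_apply]
    linear_combination MvPolynomial.X x * det_hsymmMatrix_updateCol_three_term (R := R) hx l r

end HsymmMatrix

section Interlacing

variable {k : ℕ} {lam : ℕ → ℤ}

lemma IsPartitionSeq.antitoneOn (h : IsPartitionSeq k lam) : AntitoneOn lam (Set.Iio k) :=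
  antitoneOn_of_add_one_le Set.ordConnected_Iio fun i _ _ hi => h.1 i hi

/-- The part following `lam i` in the partition `(lam 0, …, lam (k - 1), 0)`. The values of `lam`
beyond `k` are arbitrary, hence the truncation. -/
def nextPart (k : ℕ) (lam : ℕ → ℤ) (i : ℕ) : ℤ := if i + 1 < k then lam (i + 1) else 0

lemma nextPart_le (h : IsPartitionSeq k lam) {i : ℕ} (hi : i < k) :
    nextPart k lam i ≤ lam i := by
  unfold nextPart
  split_ifs with hi'
  · exact h.1 i hi'
  · exact h.2 i hi

/-- The partitions `m` with `lam 0 ≥ m 0 ≥ lam 1 ≥ m 1 ≥ ⋯ ≥ lam (k - 1) ≥ m (k - 1) ≥ 0`: the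
shapes left after deleting from a semistandard tableau of shape `lam` its largest letter. -/
noncomputable def interlacing (k : ℕ) (lam : ℕ → ℤ) : Finset (Fin k → ℤ) :=
  Fintype.piFinset fun i => Finset.Icc (nextPart k lam i) (lam i)

/-- The extension by `0` of a sequence of `k` parts to the format that `SSYT` and `schur` expect. -/
def padZero (m : Fin k → ℤ) (i : ℕ) : ℤ := if h : i < k then m ⟨i, h⟩ else 0

lemma padZero_of_lt (m : Fin k → ℤ) {i : ℕ} (hi : i < k) : padZero m i = m ⟨i, hi⟩ := dif_pos hi

lemma padZero_val (m : Fin k → ℤ) (i : Fin k) : padZero m i = m i := padZero_of_lt m i.is_lt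

lemma padZero_mem_Icc {m : Fin k → ℤ} (hm : m ∈ interlacing k lam) {i : ℕ} (hi : i < k) :
    padZero m i ∈ Set.Icc (nextPart k lam i) (lam i) := by
  rw [padZero_of_lt m hi]
  exact Finset.mem_Icc.1 (Fintype.mem_piFinset.1 hm ⟨i, hi⟩)

lemma le_padZero_of_mem_interlacing {m : Fin k → ℤ} (hm : m ∈ interlacing k lam) {i : ℕ}
    (hi : i + 1 < k) : lam (i + 1) ≤ padZero m i :=
  (if_pos hi).symm.trans_le (padZero_mem_Icc hm (by omega)).1

lemma isPartitionSeq_padZero (h : IsPartitionSeq k lam) {m : Fin k → ℤ}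
    (hm : m ∈ interlacing k lam) : IsPartitionSeq k (padZero m) := by
  refine ⟨fun i hi => (padZero_mem_Icc hm hi).2.trans (le_padZero_of_mem_interlacing hm hi),
    fun i hi => le_trans ?_ (padZero_mem_Icc hm hi).1⟩
  unfold nextPart
  split_ifs with hi'
  exacts [h.2 _ hi', le_rfl]

end Interlacing

section Branching

variable {σ R : Type*} [DecidableEq σ] [CommRing R] {k : ℕ} {lam : ℕ → ℤ}

-- Subtracting `x ^ (λ i - λ (i + 1) + 1)` times row `i + 1` from row `i` truncates each entry to a
-- sum over the interval allowed by interlacing.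
lemma det_hsymmMatrix_insert_eq_det_sum_Icc {s : Finset σ} {x : σ} (hx : x ∉ s)
    (h : IsPartitionSeq k lam) :
    (hsymmMatrix (insert x s) fun i : Fin k => lam i - i : Matrix _ _ (MvPolynomial σ R)).det =
      (Matrix.of fun i j : Fin k => ∑ m ∈ Finset.Icc (nextPart k lam i) (lam i),
        MvPolynomial.X x ^ (lam i - m).toNat * hsymmOn s (m + (j - i : ℤ))).det := by
  cases k with
  | zero => simp
  | succ k =>
    have hentry (i j : Fin (k + 1)) := hsymmOn_insert_eq_sum_Icc_add (R := R) hx (j - i : ℤ)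
      (nextPart_le h i.is_lt)
    refine det_eq_of_forall_row_eq_smul_add_succ
      (fun i => MvPolynomial.X x ^ (lam i - lam (i + 1) + 1).toNat) (fun j => ?_) fun i j => ?_
    · have hneg : (nextPart (k + 1) lam (Fin.last k) - 1 + (j - (Fin.last k : ℕ) : ℤ)) < 0 := by
        simp only [nextPart, Fin.val_last, lt_irrefl, if_false]
        omega
      rw [hsymmMatrix, Matrix.of_apply, Matrix.of_apply, sub_add_eq_add_sub, add_sub_assoc,
        hentry, hsymmOn_of_neg _ hneg, mul_zero, add_zero]
    · have hnext : nextPart (k + 1) lam i.castSucc = lam (i + 1) := if_pos (by simp)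
      rw [hsymmMatrix, Matrix.of_apply, Matrix.of_apply, Matrix.of_apply, sub_add_eq_add_sub,
        add_sub_assoc, hentry, hnext]
      congr 3
      push_cast [Fin.val_succ, Fin.val_castSucc]
      ring

theorem det_hsymmMatrix_insert_eq_sum_interlacing {s : Finset σ} {x : σ} (hx : x ∉ s)
    (h : IsPartitionSeq k lam) :
    (hsymmMatrix (insert x s) fun i : Fin k => lam i - i : Matrix _ _ (MvPolynomial σ R)).det =
      ∑ m ∈ interlacing k lam, (∏ i : Fin k, MvPolynomial.X x ^ (lam i - m i).toNat) *
        (hsymmMatrix s fun i => m i - i).det := by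
  have hexpand := (Matrix.detRowAlternating (n := Fin k)
    (R := MvPolynomial σ R)).toMultilinearMap.map_sum_finset
    (fun (i : Fin k) (m : ℤ) (j : Fin k) =>
      MvPolynomial.X x ^ (lam i - m).toNat * hsymmOn s (m + (j - i : ℤ)))
    (fun i : Fin k => Finset.Icc (nextPart k lam i) (lam i))
  rw [det_hsymmMatrix_insert_eq_det_sum_Icc hx h]
  convert hexpand using 1
  · refine congrArg Matrix.det (Matrix.ext fun i j => ?_)
    simp [Finset.sum_apply]
  · refine Finset.sum_congr rfl fun m _ => ?_
    rw [← Matrix.det_mul_column]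
    refine congrArg Matrix.det (Matrix.ext fun i j => ?_)
    simp [hsymmMatrix, sub_add_eq_add_sub, add_sub_assoc]

end Branching

section Tableaux

variable {k : ℕ} {lam : ℕ → ℤ} {a b : ℕ}

namespace SSYT

lemma ext_entry {S T : SSYT k lam a b}
    (hST : ∀ i j : ℕ, i < k → (j : ℤ) < lam i → S.entry i j = T.entry i j) : S = T := by
  have hentry : S.entry = T.entry := by
    funext i j
    by_cases hij : i < k ∧ (j : ℤ) < lam i
    · exact hST i j hij.1 hij.2
    · rw [S.zero_outside i j hij, T.zero_outside i j hij]
  cases S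
  cases T
  cases hentry
  rfl

instance : Finite (SSYT k lam a b) := by
  let entries (T : SSYT k lam a b) (i : Fin k) (j : Fin (lam i).toNat) : Fin (b + 1) :=
    ⟨T.entry i j, Nat.lt_succ_of_le (T.upper i j i.is_lt (by omega))⟩
  refine Finite.of_injective entries fun S T hST => ext_entry fun i j hi hj => ?_
  exact congrArg Fin.val (congrFun (congrFun hST ⟨i, hi⟩) ⟨j, by simp only; omega⟩)

/-- The tableau obtained from `S`, of shape `m`, by writing `b + 1` in all cells of the horizontal
strip between `m` and `lam`. -/
def fill (hab : a ≤ b + 1) (h : IsPartitionSeq k lam) {m : Fin k → ℤ}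
    (hm : m ∈ interlacing k lam) (S : SSYT k (padZero m) a b) : SSYT k lam a (b + 1) where
  entry i j :=
    if i < k ∧ (j : ℤ) < lam i then if (j : ℤ) < padZero m i then S.entry i j else b + 1 else 0
  zero_outside _ _ hij := if_neg hij
  lower i j hi hj := by
    rw [if_pos ⟨hi, hj⟩]
    split_ifs with hjm
    exacts [S.lower i j hi hjm, hab]
  upper i j hi hj := by
    rw [if_pos ⟨hi, hj⟩]
    split_ifs with hjm
    exacts [Nat.le_succ_of_le (S.upper i j hi hjm), le_rfl]
  row_weak i j₁ j₂ hi hj hj₂ := by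
    have hj₁ : (j₁ : ℤ) < lam i := by omega
    rw [if_pos (And.intro hi hj₁), if_pos (And.intro hi hj₂)]
    split_ifs with hj₁m hj₂m hj₂m
    · exact S.row_weak i j₁ j₂ hi hj hj₂m
    · exact Nat.le_succ_of_le (S.upper i j₁ hi hj₁m)
    · omega
    · exact le_rfl
  col_strict i₁ i₂ j hi hi₂ hj := by
    have hi₁ : i₁ < k := hi.trans hi₂
    have hj_succ : (j : ℤ) < lam (i₁ + 1) :=
      hj.trans_le (h.antitoneOn (show i₁ + 1 < k by omega) hi₂ hi)
    have hjm : (j : ℤ) < padZero m i₁ :=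
      hj_succ.trans_le (le_padZero_of_mem_interlacing hm (by omega))
    rw [if_pos (And.intro hi₁ (hjm.trans_le (padZero_mem_Icc hm hi₁).2)), if_pos hjm,
      if_pos (And.intro hi₂ hj)]
    split_ifs with hjm₂
    · exact S.col_strict i₁ i₂ j hi hi₂ hjm₂
    · exact Nat.lt_succ_of_le (S.upper i₁ j hi₁ hjm)

section Fill

variable (hab : a ≤ b + 1) (h : IsPartitionSeq k lam) {m : Fin k → ℤ}
  (hm : m ∈ interlacing k lam) (S : SSYT k (padZero m) a b) {i j : ℕ}

lemma fill_entry_of_lt (hi : i < k) (hj : (j : ℤ) < padZero m i) :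
    (S.fill hab h hm).entry i j = S.entry i j := by
  simp only [fill]
  rw [if_pos ⟨hi, hj.trans_le (padZero_mem_Icc hm hi).2⟩, if_pos hj]

lemma fill_entry_of_le (hi : i < k) (hjm : padZero m i ≤ j) (hj : (j : ℤ) < lam i) :
    (S.fill hab h hm).entry i j = b + 1 := by
  simp only [fill]
  rw [if_pos ⟨hi, hj⟩, if_neg hjm.not_gt]

lemma fill_entry_le_iff (hi : i < k) (hj : (j : ℤ) < lam i) :
    (S.fill hab h hm).entry i j ≤ b ↔ (j : ℤ) < padZero m i := by
  obtain hjm | hjm := lt_or_ge (j : ℤ) (padZero m i)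
  · simp [fill_entry_of_lt, hi, hjm, S.upper]
  · simp [fill_entry_of_le, hi, hjm, hj]

lemma fill_injective : Function.Injective (fill (a := a) hab h hm) := by
  intro S S' hSS'
  refine ext_entry fun i j hi hj => ?_
  rw [← fill_entry_of_lt hab h hm S hi hj, hSS', fill_entry_of_lt hab h hm S' hi hj]

lemma weight_fill :
    (S.fill hab h hm).weight =
      (∏ i : Fin k, MvPolynomial.X (b + 1) ^ (lam i - m i).toNat) * S.weight := by
  rw [weight, weight, Finset.prod_range, Finset.prod_range, ← Finset.prod_mul_distrib]
  refine Finset.prod_congr rfl fun i _ => ?_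
  have hle := (padZero_mem_Icc hm i.is_lt).2
  have hnonneg := (isPartitionSeq_padZero h hm).2 i i.is_lt
  have hsplit : (lam i).toNat = (padZero m i).toNat + (lam i - m i).toNat := by
    rw [← padZero_val m i]
    omega
  have hinner : ∏ j ∈ Finset.range (padZero m i).toNat,
      (MvPolynomial.X ((S.fill hab h hm).entry i j) : MvPolynomial ℕ ℤ) =
        ∏ j ∈ Finset.range (padZero m i).toNat, MvPolynomial.X (S.entry i j) :=
    Finset.prod_congr rfl fun j hj => by
      rw [fill_entry_of_lt hab h hm S i.is_lt (by grind)]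
  have hstrip : ∏ j ∈ Finset.range (lam i - m i).toNat,
      (MvPolynomial.X ((S.fill hab h hm).entry i ((padZero m i).toNat + j)) : MvPolynomial ℕ ℤ) =
        MvPolynomial.X (b + 1) ^ (lam i - m i).toNat := by
    refine (Finset.prod_eq_pow_card fun j hj => ?_).trans (by rw [Finset.card_range])
    rw [fill_entry_of_le hab h hm S i.is_lt (by omega) (by grind)]
  rw [hsplit, Finset.prod_range_add, hinner, hstrip, mul_comm]

end Fill

lemma exists_not_lt_and_entry_le (T : SSYT k lam a (b + 1)) (i : ℕ) :
    ∃ j : ℕ, ¬((j : ℤ) < lam i ∧ T.entry i j ≤ b) :=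
  ⟨(lam i).toNat, by omega⟩

/-- The shape formed by the entries of `T` that are at most `b`. -/
def innerShape (T : SSYT k lam a (b + 1)) (i : Fin k) : ℤ :=
  Nat.find (T.exists_not_lt_and_entry_le i)

lemma lt_innerShape_iff (T : SSYT k lam a (b + 1)) (i : Fin k) (j : ℕ) :
    (j : ℤ) < T.innerShape i ↔ (j : ℤ) < lam i ∧ T.entry i j ≤ b := by
  rw [innerShape, Nat.cast_lt, Nat.lt_find_iff]
  simp only [not_not]
  refine ⟨fun hall => hall j le_rfl, fun ⟨hj, hle⟩ j' hj' => ⟨by omega, ?_⟩⟩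
  exact (T.row_weak i j' j i.is_lt hj' hj).trans hle

lemma lt_padZero_innerShape_iff (T : SSYT k lam a (b + 1)) {i : ℕ} (hi : i < k) (j : ℕ) :
    (j : ℤ) < padZero T.innerShape i ↔ (j : ℤ) < lam i ∧ T.entry i j ≤ b := by
  rw [padZero_of_lt _ hi, lt_innerShape_iff]

lemma innerShape_nonneg (T : SSYT k lam a (b + 1)) (i : Fin k) : 0 ≤ T.innerShape i :=
  Int.natCast_nonneg _

lemma innerShape_mem_interlacing (h : IsPartitionSeq k lam) (T : SSYT k lam a (b + 1)) :
    T.innerShape ∈ interlacing k lam := by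
  refine Fintype.mem_piFinset.2 fun i => Finset.mem_Icc.2 ⟨?_, ?_⟩
  · unfold nextPart
    split_ifs with hi
    · by_contra! hlt
      obtain ⟨j, hj⟩ := Int.eq_ofNat_of_zero_le (T.innerShape_nonneg i)
      rw [hj] at hlt
      have hcol := T.col_strict i (i + 1) j (Nat.lt_succ_self i) hi hlt
      have hupper := T.upper (i + 1) j hi hlt
      exact hj.not_gt ((T.lt_innerShape_iff i j).2 ⟨hlt.trans_le (h.1 i hi), by omega⟩)
    · exact T.innerShape_nonneg i
  · by_contra! hlt
    obtain ⟨j, hj⟩ := Int.eq_ofNat_of_zero_le (h.2 i i.is_lt)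
    rw [hj] at hlt
    exact hj.not_gt ((T.lt_innerShape_iff i j).1 hlt).1

lemma innerShape_fill (hab : a ≤ b + 1) (h : IsPartitionSeq k lam) {m : Fin k → ℤ}
    (hm : m ∈ interlacing k lam) (S : SSYT k (padZero m) a b) :
    (S.fill hab h hm).innerShape = m := by
  funext i
  have hlt (j : ℕ) : (j : ℤ) < (S.fill hab h hm).innerShape i ↔ (j : ℤ) < m i := by
    rw [lt_innerShape_iff, ← padZero_val m i]
    constructor
    · exact fun ⟨hj, hle⟩ => (fill_entry_le_iff hab h hm S i.is_lt hj).1 hle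
    · intro hj
      have hj' := hj.trans_le (padZero_mem_Icc hm i.is_lt).2
      exact ⟨hj', (fill_entry_le_iff hab h hm S i.is_lt hj').2 hj⟩
  have hinner := (S.fill hab h hm).innerShape_nonneg i
  have hm_nonneg := (isPartitionSeq_padZero h hm).2 i i.is_lt
  rw [padZero_val] at hm_nonneg
  have hlt_inner := hlt ((S.fill hab h hm).innerShape i).toNat
  have hlt_m := hlt (m i).toNat
  omega

/-- The tableau formed by the entries of `T` that are at most `b`. -/
def restrict (h : IsPartitionSeq k lam) (T : SSYT k lam a (b + 1)) :
    SSYT k (padZero T.innerShape) a b where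
  entry i j := if i < k ∧ (j : ℤ) < padZero T.innerShape i then T.entry i j else 0
  zero_outside _ _ hij := if_neg hij
  lower i j hi hj := by
    rw [if_pos (And.intro hi hj)]
    exact T.lower i j hi ((T.lt_padZero_innerShape_iff hi j).1 hj).1
  upper i j hi hj := by
    rw [if_pos (And.intro hi hj)]
    exact ((T.lt_padZero_innerShape_iff hi j).1 hj).2
  row_weak i j₁ j₂ hi hj hj₂ := by
    rw [if_pos (And.intro hi (show (j₁ : ℤ) < _ by omega)), if_pos (And.intro hi hj₂)]
    exact T.row_weak i j₁ j₂ hi hj ((T.lt_padZero_innerShape_iff hi j₂).1 hj₂).1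
  col_strict i₁ i₂ j hi hi₂ hj := by
    have hi₁ : i₁ < k := hi.trans hi₂
    have hanti := (isPartitionSeq_padZero h (T.innerShape_mem_interlacing h)).antitoneOn
    rw [if_pos (And.intro hi₁ (hj.trans_le (hanti hi₁ hi₂ hi.le))), if_pos (And.intro hi₂ hj)]
    exact T.col_strict i₁ i₂ j hi hi₂ ((T.lt_padZero_innerShape_iff hi₂ j).1 hj).1

lemma restrict_entry_of_lt (h : IsPartitionSeq k lam) (T : SSYT k lam a (b + 1)) {i j : ℕ}
    (hi : i < k) (hj : (j : ℤ) < padZero T.innerShape i) :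
    (T.restrict h).entry i j = T.entry i j :=
  if_pos ⟨hi, hj⟩

lemma fill_restrict (hab : a ≤ b + 1) (h : IsPartitionSeq k lam) (T : SSYT k lam a (b + 1)) :
    (T.restrict h).fill hab h (T.innerShape_mem_interlacing h) = T := by
  refine ext_entry fun i j hi hj => ?_
  obtain hjm | hjm := lt_or_ge (j : ℤ) (padZero T.innerShape i)
  · rw [fill_entry_of_lt _ _ _ _ hi hjm, restrict_entry_of_lt h T hi hjm]
  · have hlt : b < T.entry i j := by
      by_contra! hle
      exact hjm.not_gt ((T.lt_padZero_innerShape_iff hi j).2 ⟨hj, hle⟩)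
    rw [fill_entry_of_le _ _ _ _ hi hjm hj]
    exact le_antisymm hlt (T.upper i j hi hj)

end SSYT

lemma schur_eq_finsum (h : IsPartitionSeq k lam) :
    schur k lam a b = ∑ᶠ T : SSYT k lam a b, T.weight :=
  if_pos h

theorem schur_succ_eq_sum_interlacing (hab : a ≤ b + 1) (h : IsPartitionSeq k lam) :
    schur k lam a (b + 1) =
      ∑ m ∈ interlacing k lam, (∏ i : Fin k, MvPolynomial.X (b + 1) ^ (lam i - m i).toNat) *
        schur k (padZero m) a b := by
  classical
  have := Fintype.ofFinite (SSYT k lam a (b + 1))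
  rw [schur_eq_finsum h, finsum_eq_sum_of_fintype,
    ← Finset.sum_fiberwise_of_maps_to fun T _ => T.innerShape_mem_interlacing h]
  refine Finset.sum_congr rfl fun m hm => ?_
  have := Fintype.ofFinite (SSYT k (padZero m) a b)
  rw [schur_eq_finsum (isPartitionSeq_padZero h hm), finsum_eq_sum_of_fintype, Finset.mul_sum]
  symm
  refine Finset.sum_bij (fun S _ => S.fill hab h hm) (fun S _ => ?_)
    (fun _ _ _ _ hSS' => SSYT.fill_injective hab h hm hSS') (fun T hT => ?_)
    fun S _ => (SSYT.weight_fill hab h hm S).symm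
  · exact Finset.mem_filter.2 ⟨Finset.mem_univ _, SSYT.innerShape_fill hab h hm S⟩
  · obtain rfl := (Finset.mem_filter.1 hT).2
    exact ⟨T.restrict h, Finset.mem_univ _, T.fill_restrict hab h⟩

lemma SSYT.weight_eq_one_of_forall_eq_zero (hlam : ∀ i < k, lam i = 0) (T : SSYT k lam a b) :
    T.weight = 1 :=
  Finset.prod_eq_one fun i hi => by simp [hlam i (Finset.mem_range.1 hi)]

lemma schur_eq_one_of_forall_eq_zero (hlam : ∀ i < k, lam i = 0) : schur k lam a b = 1 := by
  have hpart : IsPartitionSeq k lam :=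
    ⟨fun i hi => by rw [hlam _ hi, hlam i (by omega)], fun i hi => (hlam i hi).ge⟩
  have hempty (i j : ℕ) (hi : i < k) : ¬(j : ℤ) < lam i := by
    rw [hlam i hi]
    omega
  let T₀ : SSYT k lam a b :=
    { entry := fun _ _ => 0
      zero_outside := fun _ _ _ => rfl
      lower := fun i j hi hj => absurd hj (hempty i j hi)
      upper := fun i j hi hj => absurd hj (hempty i j hi)
      row_weak := fun _ _ _ _ _ _ => le_rfl
      col_strict := fun _ i₂ j _ hi₂ hj => absurd hj (hempty i₂ j hi₂) }
  rw [schur_eq_finsum hpart, finsum_eq_single _ T₀, T₀.weight_eq_one_of_forall_eq_zero hlam]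
  exact fun T hT => absurd (SSYT.ext_entry fun i j hi hj => absurd hj (hempty i j hi)) hT

lemma schur_eq_zero_of_lt (hba : b < a) {i : ℕ} (hi : i < k) (hlam : 0 < lam i) :
    schur k lam a b = 0 := by
  unfold schur
  split_ifs
  · have hnone : IsEmpty (SSYT k lam a b) :=
      ⟨fun T => (((T.lower i 0 hi hlam).trans (T.upper i 0 hi hlam)).trans_lt hba).false⟩
    exact finsum_of_isEmpty _
  · rfl

lemma schur_of_lt_eq_det_hsymmMatrix_empty (hba : b < a) (h : IsPartitionSeq k lam) :
    schur k lam a b = (hsymmMatrix ∅ fun i : Fin k => lam i - i).det := by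
  by_cases hlam : ∀ i < k, lam i = 0
  · have hone :
        (hsymmMatrix ∅ fun i : Fin k => lam i - i : Matrix _ _ (MvPolynomial ℕ ℤ)) = 1 := by
      simpa [hlam] using hsymmMatrix_empty_neg
    rw [schur_eq_one_of_forall_eq_zero hlam, hone, Matrix.det_one]
  · push Not at hlam
    obtain ⟨i, hi, hne⟩ := hlam
    have hpos : 0 < lam i := (h.2 i hi).lt_of_ne' hne
    have hk : 0 < k := by omega
    have hfirst : lam i ≤ lam 0 := h.antitoneOn hk hi (Nat.zero_le i)
    rw [schur_eq_zero_of_lt hba hi hpos,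
      det_hsymmMatrix_empty_of_pos (i := ⟨0, hk⟩) (by simpa using hpos.trans_le hfirst)]

theorem schur_eq_det_hsymmMatrix (ha : 0 < a) (h : IsPartitionSeq k lam) :
    schur k lam a b = (hsymmMatrix (Finset.Icc a b) fun i : Fin k => lam i - i).det := by
  induction b generalizing lam with
  | zero =>
    rw [Finset.Icc_eq_empty_of_lt ha, schur_of_lt_eq_det_hsymmMatrix_empty ha h]
  | succ b ih =>
    obtain hab | hba := le_or_gt a (b + 1)
    · rw [schur_succ_eq_sum_interlacing hab h, ← Finset.insert_Icc_right_eq_Icc_add_one hab,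
        det_hsymmMatrix_insert_eq_sum_interlacing (by simp) h]
      refine Finset.sum_congr rfl fun m hm => ?_
      rw [ih (isPartitionSeq_padZero h hm)]
      simp only [padZero_val]
    · rw [Finset.Icc_eq_empty_of_lt hba, schur_of_lt_eq_det_hsymmMatrix_empty hba h]

end Tableaux

section DeletedPart

variable {k : ℕ} {lam : ℕ → ℤ}

lemma isPartitionSeq_deletedPart_add (hdec : ∀ i, i + 1 < k + 1 → lam (i + 1) ≤ lam i)
    (hpos : ∀ i, i < k + 1 → 1 ≤ lam i) (t : ℕ) {c : ℤ} (hc : 0 ≤ c) :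
    IsPartitionSeq k fun j => if j < t then lam j + c else lam (j + 1) - 1 + c := by
  refine ⟨fun i hi => ?_, fun i hi => ?_⟩
  · have hi₀ := hdec i (by omega)
    have hi₁ := hdec (i + 1) (by omega)
    grind
  · have hi₀ := hpos i (by omega)
    have hi₁ := hpos (i + 1) (by omega)
    grind

-- The case `c = 0` is the shape `μ` of the main theorem, the case `c = 1` the shape `ν`.
lemma schur_deletedPart_add_eq_det_hsymmMatrix {a b : ℕ} (ha : 0 < a)
    (hdec : ∀ i, i + 1 < k + 1 → lam (i + 1) ≤ lam i) (hpos : ∀ i, i < k + 1 → 1 ≤ lam i)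
    (t : Fin (k + 1)) {c : ℤ} (hc : 0 ≤ c) :
    schur k (fun j => if j < t then lam j + c else lam (j + 1) - 1 + c) a b =
      (hsymmMatrix (Finset.Icc a b)
        ((fun i : Fin (k + 1) => lam i - i) ∘ t.succAbove + fun _ => c)).det := by
  rw [schur_eq_det_hsymmMatrix ha (isPartitionSeq_deletedPart_add hdec hpos t hc)]
  congr 2
  funext i
  simp only [Pi.add_apply, Function.comp_apply, Fin.succAbove, Fin.lt_def, Fin.val_castSucc]
  split_ifs
  · rw [Fin.val_castSucc]
    ring
  · rw [Fin.val_succ]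
    push_cast
    ring

end DeletedPart

/-- for a partition `λ = (λ_1 ≥ … ≥ λ_k ≥ 1)`, `0 ≤ t ≤ k-1` and `n ≥ k`,
with `μ = (λ_1,…,λ_t,λ_{t+2}-1,…,λ_k-1)`, `ν = (λ_1+1,…,λ_t+1,λ_{t+2},…,λ_k)` and
`ρ = (λ_1-1,…,λ_k-1)`:
`s^{[n]}_λ · s^{[2,n]}_μ = s^{[2,n]}_λ · s^{[n]}_μ + x_1 · s^{[n]}_ρ · s^{[2,n]}_ν`. -/
theorem stmt_11 (k t n : ℕ) (hk : 1 ≤ k) (ht : t ≤ k - 1) (hn : k ≤ n) (lam : ℕ → ℤ)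
    (hdec : ∀ i, i + 1 < k → lam (i + 1) ≤ lam i) (hpos : ∀ i, i < k → 1 ≤ lam i) :
    schur k lam 1 n *
        schur (k - 1) (fun j => if j < t then lam j else lam (j + 1) - 1) 2 n =
      schur k lam 2 n *
          schur (k - 1) (fun j => if j < t then lam j else lam (j + 1) - 1) 1 n +
        MvPolynomial.X 1 * schur k (fun j => lam j - 1) 1 n *
          schur (k - 1) (fun j => if j < t then lam j + 1 else lam (j + 1)) 2 n := by
  obtain ⟨k, rfl⟩ := Nat.exists_eq_add_of_le' hk
  obtain ⟨t, rfl⟩ : ∃ t' : Fin (k + 1), (t' : ℕ) = t := ⟨⟨t, by omega⟩, rfl⟩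
  have hlam : IsPartitionSeq (k + 1) lam := ⟨hdec, fun i hi => zero_le_one.trans (hpos i hi)⟩
  have hrho : IsPartitionSeq (k + 1) fun j => lam j - 1 :=
    ⟨fun i hi => sub_le_sub_right (hdec i hi) 1, fun i hi => sub_nonneg.2 (hpos i hi)⟩
  have hIcc : Finset.Icc 1 n = insert 1 (Finset.Icc 2 n) :=
    (Finset.insert_Icc_add_one_left_eq_Icc (hk.trans hn)).symm
  have hmu {a : ℕ} (ha : 0 < a) :=
    schur_deletedPart_add_eq_det_hsymmMatrix (b := n) ha hdec hpos t le_rfl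
  have hnu := schur_deletedPart_add_eq_det_hsymmMatrix (b := n) two_pos hdec hpos t zero_le_one
  have hdet := det_hsymmMatrix_three_term (R := ℤ) (x := 1) (s := Finset.Icc 2 n) (by simp)
    (fun i : Fin (k + 1) => lam i - i) t.succAbove
  simp only [add_zero, sub_add_cancel] at hmu hnu
  rw [Nat.add_sub_cancel, schur_eq_det_hsymmMatrix one_pos hlam,
    schur_eq_det_hsymmMatrix two_pos hlam, schur_eq_det_hsymmMatrix one_pos hrho,
    hmu one_pos, hmu two_pos, hnu, hIcc]
  simpa only [Pi.add_def, Pi.sub_def, Pi.one_apply, Function.comp_def, add_zero,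
    sub_right_comm] using hdet
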